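/- Let k, ℓ ≥ 1 and let P, P' be database properties. Suppose that for every x = (x_1,…,x_k) ∈ X^k with pairwise distinct entries and every D ∈ DB there is a finite family (L_t)_t of database properties, each L_t being ℓ-local with support supp(L_t) ⊆ {x_1,…,x_k} of size at most ℓ, such that P'|_{D|^x} ⊆ ∪_t L_t and (∪_t L_t) ∩ P|_{D|^x} = ∅. Then ⟦P → P'⟧_k ≤ max over all such x and D of e·ℓ·√(10 · Σ_t max_{t' ∈ supp(L_t)} max_{D''} ρ(L_t, t', D'')), where D'' ranges over all databases agreeing with D at every point outside supp(L_t), and ρ(L_t, t', D'') := |{r ∈ Y : D''[t'↦r] ∈ L_t}|/M if the set {r ∈ Ȳ : D''[t'↦r] ∈ L_t} is neither empty nor all of Ȳ, and ρ(L_t, t', D'') := 0 otherwise; e is Euler's number. -/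

import Mathlib

noncomputable section

/- `Ȳ = Y ∪ {⊥}` is modeled by `Option Y` (`⊥ = none`), databases by `X → Option Y`,
and `ℂ[DB]` by `EuclideanSpace ℂ (X → Option Y)`. -/

/-- matrix (in the computational basis) of the single-register unitary `Comp` -/
def compMat (Y : Type*) [Fintype Y] [DecidableEq Y] :
    Matrix (Option Y) (Option Y) ℂ :=
  Matrix.of fun u v =>
    match u, v with
    | none, none => 0
    | some _, none => ((Real.sqrt (Fintype.card Y) : ℝ) : ℂ)⁻¹
    | none, some _ => ((Real.sqrt (Fintype.card Y) : ℝ) : ℂ)⁻¹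
    | some a, some b => (if a = b then (1 : ℂ) else 0) - ((Fintype.card Y : ℕ) : ℂ)⁻¹

/-- matrix of the diagonal unitary `O_ŷ` associated to a character `ŷ` of `Y` -/
def oMat {Y : Type*} [Fintype Y] [DecidableEq Y] [AddCommGroup Y] (c : AddChar Y ℂ) :
    Matrix (Option Y) (Option Y) ℂ :=
  Matrix.diagonal fun u => Option.elim u 1 fun r => c r

/-- matrix of the single-register compressed oracle `cO_ŷ = Comp ∘ O_ŷ ∘ Comp` -/
def cOMat {Y : Type*} [Fintype Y] [DecidableEq Y] [AddCommGroup Y] (c : AddChar Y ℂ) :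
    Matrix (Option Y) (Option Y) ℂ :=
  compMat Y * oMat c * compMat Y

/-- a single-register operator (given by its matrix `m`) acting at register `x0` -/
def liftMat {X Y : Type*} [Fintype X] [DecidableEq X] [DecidableEq Y] (x0 : X)
    (m : Matrix (Option Y) (Option Y) ℂ) :
    Matrix (X → Option Y) (X → Option Y) ℂ :=
  Matrix.of fun D' D => if ∀ a, a ≠ x0 → D' a = D a then m (D' x0) (D x0) else 0

/-- matrix of `cO_{x,ŷ}`: the composition of `cO_{ŷ i}` acting at register `x i` -/
def cOparMat {X Y : Type*} [Fintype X] [DecidableEq X] [Fintype Y] [DecidableEq Y]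
    [AddCommGroup Y] {k : ℕ} (x : Fin k → X) (c : Fin k → AddChar Y ℂ) :
    Matrix (X → Option Y) (X → Option Y) ℂ :=
  (List.ofFn fun i : Fin k => liftMat (x i) (cOMat (c i))).prod

/-- matrix of the orthogonal projection onto `span{e_D : D ∈ P}` -/
def projMat {ι : Type*} [DecidableEq ι] (P : Set ι) : Matrix ι ι ℂ := by
  classical exact Matrix.of fun i j => if i = j ∧ i ∈ P then 1 else 0

/-- the (continuous linear) operator on `ℓ²` given by a matrix -/
def toOp {ι : Type*} [Fintype ι] [DecidableEq ι] (m : Matrix ι ι ℂ) :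
    EuclideanSpace ℂ ι →L[ℂ] EuclideanSpace ℂ ι :=
  LinearMap.toContinuousLinearMap (Matrix.toEuclideanLin m)

/-- `D|^x`: the set of databases that coincide with `D` outside of `x` -/
def agreeOff {X Y : Type*} {k : ℕ} (D : X → Option Y) (x : Fin k → X) :
    Set (X → Option Y) :=
  {D' | ∀ a : X, (∀ i, x i ≠ a) → D' a = D a}

/-- The quantum transition capacity `⟦P → P' | X₀⟧_k`: the supremum, over all `x ∈ X₀^k`
with pairwise distinct entries, all `k`-tuples `ŷ` of characters of `Y` and all databases `D`,
of `‖P'|_{D|^x} ∘ cO_{x,ŷ} ∘ P|_{D|^x}‖` (`0` if the range is empty). -/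
def qtc {X Y : Type*} [Fintype X] [DecidableEq X] [Fintype Y] [DecidableEq Y]
    [AddCommGroup Y] (P P' : Set (X → Option Y)) (k : ℕ) (X₀ : Set X) : ℝ :=
  sSup {v : ℝ | ∃ (x : Fin k → X) (c : Fin k → AddChar Y ℂ) (D : X → Option Y),
    Function.Injective x ∧ (∀ i, x i ∈ X₀) ∧
    v = ‖(toOp (projMat (P' ∩ agreeOff D x))).comp
          ((toOp (cOparMat x c)).comp (toOp (projMat (P ∩ agreeOff D x))))‖}

end


section
open scoped Matrix.Norms.L2Operator

theorem norm_toOp {ι : Type*} [Fintype ι] [DecidableEq ι] (A : Matrix ι ι ℂ) :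
    ‖toOp A‖ = ‖A‖ := rfl

theorem toOp_mul {ι : Type*} [Fintype ι] [DecidableEq ι] (A B : Matrix ι ι ℂ) :
    toOp (A * B) = (toOp A).comp (toOp B) :=
  map_mul (Matrix.toEuclideanCLM (𝕜 := ℂ)) A B

theorem l2_opNorm_le_of_sum_sq {ι : Type*} [Fintype ι] [DecidableEq ι] {A : Matrix ι ι ℂ} {C : ℝ}
    (hC : 0 ≤ C)
    (h : ∀ g : ι → ℂ, ∑ i, ‖A.mulVec g i‖ ^ 2 ≤ C ^ 2 * ∑ i, ‖g i‖ ^ 2) : ‖A‖ ≤ C := by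
  rw [← norm_toOp]
  refine ContinuousLinearMap.opNorm_le_bound _ hC fun v => ?_
  refine le_of_sq_le_sq ?_ (by positivity)
  rw [mul_pow, EuclideanSpace.norm_sq_eq, EuclideanSpace.norm_sq_eq]
  exact h v.ofLp

theorem sum_sq_mulVec_le {ι : Type*} [Fintype ι] [DecidableEq ι] (A : Matrix ι ι ℂ) {C : ℝ}
    (hA : ‖A‖ ≤ C) (g : ι → ℂ) :
    ∑ i, ‖A.mulVec g i‖ ^ 2 ≤ C ^ 2 * ∑ i, ‖g i‖ ^ 2 := by
  have h := (Matrix.l2_opNorm_mulVec A (WithLp.toLp 2 g)).trans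
    (mul_le_mul_of_nonneg_right hA (norm_nonneg _))
  have := pow_le_pow_left₀ (norm_nonneg _) h 2
  rwa [mul_pow, EuclideanSpace.norm_sq_eq, EuclideanSpace.norm_sq_eq] at this

theorem l2_opNorm_le_frobenius {ι : Type*} [Fintype ι] [DecidableEq ι] (A : Matrix ι ι ℂ) :
    ‖A‖ ≤ √(∑ i, ∑ j, ‖A i j‖ ^ 2) := by
  have h0 : (0 : ℝ) ≤ ∑ i, ∑ j, ‖A i j‖ ^ 2 := by positivity
  refine l2_opNorm_le_of_sum_sq (Real.sqrt_nonneg _) fun g => ?_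
  rw [Real.sq_sqrt h0, Finset.sum_mul]
  refine Finset.sum_le_sum fun i _ => ?_
  calc ‖A.mulVec g i‖ ^ 2 ≤ (∑ j, ‖A i j‖ * ‖g j‖) ^ 2 := by
        gcongr
        refine (norm_sum_le _ _).trans_eq ?_
        simp
    _ ≤ _ := Finset.sum_mul_sq_le_sq_mul_sq _ _ _

theorem l2_opNorm_le_one_of_star_mul_self {ι : Type*} [Fintype ι] [DecidableEq ι]
    {A : Matrix ι ι ℂ} (h : star A * A = 1) : ‖A‖ ≤ 1 := by
  refine l2_opNorm_le_of_sum_sq zero_le_one fun g => ?_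
  have key : star (A.mulVec g) ⬝ᵥ A.mulVec g = star g ⬝ᵥ g := by
    rw [Matrix.star_mulVec, Matrix.dotProduct_mulVec, Matrix.vecMul_vecMul,
      ← Matrix.star_eq_conjTranspose, h, Matrix.vecMul_one]
  have conv : ∀ w : ι → ℂ, star w ⬝ᵥ w = ((∑ i, ‖w i‖ ^ 2 : ℝ) : ℂ) := fun w => by
    simp [dotProduct, Complex.conj_mul']
  rw [conv, conv] at key
  rw [one_pow, one_mul]
  exact (Complex.ofReal_injective key).le

/-! ### Projections -/

theorem projMat_eq_diagonal {ι : Type*} [DecidableEq ι] (S : Set ι) :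
    projMat S = Matrix.diagonal (S.indicator fun _ => (1 : ℂ)) := by
  classical
  ext i j
  by_cases hij : i = j <;> by_cases hi : i ∈ S <;> simp_all [projMat, Matrix.diagonal]

theorem projMat_mulVec {ι : Type*} [Fintype ι] [DecidableEq ι] (S : Set ι) (g : ι → ℂ) :
    (projMat S).mulVec g = S.indicator g := by
  classical
  ext i
  rw [projMat_eq_diagonal, Matrix.mulVec_diagonal]
  by_cases hi : i ∈ S <;> simp [hi]

theorem norm_projMat_le_one {ι : Type*} [Fintype ι] [DecidableEq ι] (S : Set ι) :
    ‖projMat S‖ ≤ 1 := by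
  refine l2_opNorm_le_of_sum_sq zero_le_one fun g => ?_
  rw [one_pow, one_mul, projMat_mulVec]
  gcongr with i
  exact norm_indicator_le_norm_self _ _

theorem projMat_add_compl {ι : Type*} [DecidableEq ι] (S : Set ι) :
    projMat S + projMat Sᶜ = 1 := by
  classical
  rw [projMat_eq_diagonal, projMat_eq_diagonal, Matrix.diagonal_add, ← Matrix.diagonal_one]
  congr 1
  ext i
  by_cases hi : i ∈ S <;> simp [hi]

theorem projMat_mul_of_subset {ι : Type*} [Fintype ι] [DecidableEq ι] {S T : Set ι}
    (h : T ⊆ S) : projMat S * projMat T = projMat T := by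
  classical
  rw [projMat_eq_diagonal, projMat_eq_diagonal, Matrix.diagonal_mul_diagonal]
  congr 1
  ext i
  by_cases hi : i ∈ T
  · simp [hi, h hi]
  · simp [hi]

theorem projMat_mul_projMat_compl {ι : Type*} [Fintype ι] [DecidableEq ι] (S : Set ι) :
    projMat S * projMat Sᶜ = 0 := by
  classical
  rw [projMat_eq_diagonal, projMat_eq_diagonal, Matrix.diagonal_mul_diagonal,
    ← Matrix.diagonal_zero]
  congr 1
  ext i
  by_cases hi : i ∈ S <;> simp [hi]

theorem projMat_mul_mul_projMat_apply {ι : Type*} [Fintype ι] [DecidableEq ι] (S T : Set ι)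
    (A : Matrix ι ι ℂ) (i j : ι) :
    (projMat S * A * projMat T) i j =
      S.indicator (fun _ => (1 : ℂ)) i * A i j * T.indicator (fun _ => (1 : ℂ)) j := by
  rw [projMat_eq_diagonal, projMat_eq_diagonal, Matrix.mul_diagonal, Matrix.diagonal_mul]

theorem norm_list_prod_mul_projMat_le_one {ι : Type*} [Fintype ι] [DecidableEq ι]
    (S : Set ι) (l : List (Matrix ι ι ℂ)) (hl : ∀ A ∈ l, ‖A‖ ≤ 1) :
    ‖l.prod * projMat S‖ ≤ 1 := by
  induction l with
  | nil => simpa using norm_projMat_le_one S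
  | cons A l ih =>
    rw [List.prod_cons, mul_assoc]
    exact (norm_mul_le _ _).trans (mul_le_one₀ (hl A (by simp)) (norm_nonneg _)
      (ih fun B hB => hl B (by simp [hB])))

theorem norm_proj_mul_prod_mul_proj_compl_le {ι : Type*} [Fintype ι] [DecidableEq ι]
    (S : Set ι) (l : List (Matrix ι ι ℂ)) (hl : ∀ A ∈ l, ‖A‖ ≤ 1) :
    ‖projMat S * l.prod * projMat Sᶜ‖ ≤
      (l.map fun A => ‖projMat S * A * projMat Sᶜ‖).sum := by
  induction l with
  | nil => simp [projMat_mul_projMat_compl]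
  | cons A l ih =>
    have hl' : ∀ B ∈ l, ‖B‖ ≤ 1 := fun B hB => hl B (by simp [hB])
    have hsplit : projMat S * (A * l.prod) * projMat Sᶜ =
        projMat S * A * projMat Sᶜ * (l.prod * projMat Sᶜ) +
          projMat S * A * (projMat S * l.prod * projMat Sᶜ) := by
      calc projMat S * (A * l.prod) * projMat Sᶜ
          = projMat S * A * (projMat S + projMat Sᶜ) * l.prod * projMat Sᶜ := by
            rw [projMat_add_compl]; simp only [mul_assoc, one_mul]
        _ = _ := by noncomm_ring
    have hSA : ‖projMat S * A‖ ≤ 1 := (norm_mul_le _ _).trans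
      (mul_le_one₀ (norm_projMat_le_one S) (norm_nonneg _) (hl A (by simp)))
    rw [List.prod_cons, List.map_cons, List.sum_cons, hsplit]
    refine (norm_add_le _ _).trans (add_le_add ?_ ?_)
    · exact (norm_mul_le _ _).trans (mul_le_of_le_one_right (norm_nonneg _)
        (norm_list_prod_mul_projMat_le_one _ _ hl'))
    · exact (norm_mul_le _ _).trans
        ((mul_le_of_le_one_left (norm_nonneg _) hSA).trans (ih hl'))

theorem sq_norm_proj_mul_proj_le {ι τ : Type*} [Fintype ι] [DecidableEq ι] [Fintype τ]
    {P P' : Set ι} {L : τ → Set ι} (hcover : P' ⊆ ⋃ t, L t) (hdisj : (⋃ t, L t) ∩ P = ∅)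
    (U : Matrix ι ι ℂ) :
    ‖projMat P' * U * projMat P‖ ^ 2 ≤ ∑ t, ‖projMat (L t) * U * projMat (L t)ᶜ‖ ^ 2 := by
  have h0 : (0 : ℝ) ≤ ∑ t, ‖projMat (L t) * U * projMat (L t)ᶜ‖ ^ 2 := by positivity
  refine (Real.le_sqrt (norm_nonneg _) h0).1 (l2_opNorm_le_of_sum_sq (Real.sqrt_nonneg _) ?_)
  intro g
  rw [Real.sq_sqrt h0, Finset.sum_mul]
  have hP : ∀ t, (projMat (L t)ᶜ : Matrix ι ι ℂ) * projMat P = projMat P := fun t =>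
    projMat_mul_of_subset fun i hi hL =>
      (Set.eq_empty_iff_forall_notMem.1 hdisj i) ⟨Set.mem_iUnion_of_mem t hL, hi⟩
  have hg : ∑ i, ‖(projMat P).mulVec g i‖ ^ 2 ≤ ∑ i, ‖g i‖ ^ 2 := by
    simpa using sum_sq_mulVec_le _ (norm_projMat_le_one P) g
  calc ∑ i, ‖(projMat P' * U * projMat P).mulVec g i‖ ^ 2
      ≤ ∑ t, ∑ i, ‖(projMat (L t) * U * projMat P).mulVec g i‖ ^ 2 := by
        rw [Finset.sum_comm]
        refine Finset.sum_le_sum fun i _ => ?_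
        simp only [mul_assoc, ← Matrix.mulVec_mulVec _ (projMat _) (U * projMat P),
          projMat_mulVec]
        by_cases hi : i ∈ P'
        · obtain ⟨t, ht⟩ := Set.mem_iUnion.1 (hcover hi)
          refine le_trans ?_ (Finset.single_le_sum (fun s _ => by positivity) (Finset.mem_univ t))
          simp [hi, ht]
        · simp only [Set.indicator_of_notMem hi]
          simp only [norm_zero, ne_eq, OfNat.ofNat_ne_zero, not_false_eq_true, zero_pow]
          positivity
    _ ≤ ∑ t, ‖projMat (L t) * U * projMat (L t)ᶜ‖ ^ 2 * ∑ i, ‖g i‖ ^ 2 := by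
        refine Finset.sum_le_sum fun t _ => ?_
        refine le_trans ?_ (mul_le_mul_of_nonneg_left hg (by positivity))
        refine le_trans (le_of_eq ?_) (sum_sq_mulVec_le _ le_rfl _)
        rw [Matrix.mulVec_mulVec, mul_assoc (_ * U) _ (projMat P), hP, mul_assoc]

theorem norm_toOp_proj_comp_le {ι τ : Type*} [Fintype ι] [DecidableEq ι] [Fintype τ]
    {P P' : Set ι} {L : τ → Set ι} (hcover : P' ⊆ ⋃ t, L t) (hdisj : (⋃ t, L t) ∩ P = ∅)
    (U : Matrix ι ι ℂ) {b : ℝ} (hb : 0 ≤ b) {a : τ → ℝ} (ha : ∀ t, 0 ≤ a t)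
    (hL : ∀ t, ‖toOp (projMat (L t) * U * projMat (L t)ᶜ)‖ ≤ b * √(10 * a t)) :
    ‖(toOp (projMat P')).comp ((toOp U).comp (toOp (projMat P)))‖ ≤ b * √(10 * ∑ t, a t) := by
  have hsum : 0 ≤ ∑ t, a t := Finset.sum_nonneg fun t _ => ha t
  rw [← toOp_mul, ← toOp_mul, norm_toOp, ← mul_assoc]
  refine le_of_sq_le_sq ((sq_norm_proj_mul_proj_le hcover hdisj U).trans ?_) (by positivity)
  calc ∑ t, ‖projMat (L t) * U * projMat (L t)ᶜ‖ ^ 2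
      ≤ ∑ t, (b * √(10 * a t)) ^ 2 := by
        gcongr with t
        exact hL t
    _ = (b * √(10 * ∑ t, a t)) ^ 2 := by
        rw [mul_pow, Real.sq_sqrt (by positivity), Finset.mul_sum, Finset.mul_sum]
        refine Finset.sum_congr rfl fun t _ => ?_
        rw [mul_pow, Real.sq_sqrt (mul_nonneg (by norm_num) (ha t))]

/-! ### Operators acting on one register -/

theorem sum_sum_update {X Z : Type*} [Fintype X] [DecidableEq X] [Fintype Z]
    [DecidableEq Z] (x₀ : X) (f : (X → Z) → ℝ) :
    ∑ D : X → Z, ∑ r, f (Function.update D x₀ r) = Fintype.card Z * ∑ D, f D := by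
  have hinv : Function.Involutive
      (fun p : (X → Z) × Z => (Function.update p.1 x₀ p.2, p.1 x₀)) := by
    rintro ⟨D, r⟩
    simp
  rw [← Fintype.sum_prod_type' fun (D : X → Z) (r : Z) => f (Function.update D x₀ r)]
  rw [show ∑ p : (X → Z) × Z, f (Function.update p.1 x₀ p.2) = ∑ p : (X → Z) × Z, f p.1 from
    Equiv.sum_comp (hinv.toPerm _) fun p => f p.1, Fintype.sum_prod_type]
  simp [Finset.mul_sum]

theorem l2_opNorm_le_of_register_blocks {X Z : Type*} [Fintype X] [DecidableEq X] [Fintype Z]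
    [DecidableEq Z] (x₀ : X) {A : Matrix (X → Z) (X → Z) ℂ} {C : ℝ} (hC : 0 ≤ C)
    (hA : ∀ D' D, (∃ a, a ≠ x₀ ∧ D' a ≠ D a) → A D' D = 0)
    (h : ∀ D : X → Z, ‖(Matrix.of fun r s =>
      A (Function.update D x₀ r) (Function.update D x₀ s) : Matrix Z Z ℂ)‖ ≤ C) : ‖A‖ ≤ C := by
  refine l2_opNorm_le_of_sum_sq hC fun g => ?_
  rcases isEmpty_or_nonempty Z with hZ | hZ
  · have : IsEmpty (X → Z) := ⟨fun D => hZ.elim (D x₀)⟩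
    simp
  have hcard : (0 : ℝ) < Fintype.card Z := by exact_mod_cast Fintype.card_pos
  refine le_of_mul_le_mul_left ?_ hcard
  rw [mul_left_comm, ← sum_sum_update x₀, ← sum_sum_update x₀, Finset.mul_sum]
  refine Finset.sum_le_sum fun D _ => ?_
  refine le_trans (le_of_eq ?_) (sum_sq_mulVec_le _ (h D) fun s => g (Function.update D x₀ s))
  refine Finset.sum_congr rfl fun r _ => ?_
  congr 2
  refine (Fintype.sum_of_injective (Function.update D x₀) (Function.update_injective D x₀)
    _ _ ?_ fun s => rfl).symm
  intro D' hD'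
  refine mul_eq_zero_of_left (hA _ _ ?_) _
  by_contra! hagree
  refine hD' ⟨D' x₀, ?_⟩
  rw [Function.update_eq_iff]
  refine ⟨rfl, fun a ha => ?_⟩
  rw [← hagree a ha, Function.update_of_ne ha]

theorem liftMat_apply_update {X Y : Type*} [Fintype X] [DecidableEq X] [DecidableEq Y] (x₀ : X)
    (m : Matrix (Option Y) (Option Y) ℂ) (D : X → Option Y) (r s : Option Y) :
    liftMat x₀ m (Function.update D x₀ r) (Function.update D x₀ s) = m r s := by
  simp +contextual [liftMat]

theorem liftMat_apply_eq_zero {X Y : Type*} [Fintype X] [DecidableEq X] [DecidableEq Y] {x₀ : X}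
    (m : Matrix (Option Y) (Option Y) ℂ) {D' D : X → Option Y}
    (h : ∃ a, a ≠ x₀ ∧ D' a ≠ D a) : liftMat x₀ m D' D = 0 := by
  simpa [liftMat] using fun h' => (h.choose_spec.2 (h' _ h.choose_spec.1)).elim

theorem norm_liftMat_le {X Y : Type*} [Fintype X] [DecidableEq X] [Fintype Y] [DecidableEq Y]
    (x₀ : X) (m : Matrix (Option Y) (Option Y) ℂ) : ‖liftMat x₀ m‖ ≤ ‖m‖ := by
  refine l2_opNorm_le_of_register_blocks x₀ (norm_nonneg _)
    (fun D' D h => liftMat_apply_eq_zero m h) fun D => le_of_eq ?_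
  congr 1
  ext r s
  simp [liftMat_apply_update]

theorem norm_proj_mul_liftMat_mul_proj_compl_le {X Y : Type*} [Fintype X] [DecidableEq X]
    [Fintype Y] [DecidableEq Y] (S : Set (X → Option Y)) (x₀ : X)
    (m : Matrix (Option Y) (Option Y) ℂ) {C : ℝ} (hC : 0 ≤ C)
    (h : ∀ D : X → Option Y, ‖projMat {r | Function.update D x₀ r ∈ S} * m *
      projMat {r | Function.update D x₀ r ∈ S}ᶜ‖ ≤ C) :
    ‖projMat S * liftMat x₀ m * projMat Sᶜ‖ ≤ C := by
  classical
  refine l2_opNorm_le_of_register_blocks x₀ hC (fun D' D hD => ?_) fun D => ?_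
  · rw [projMat_mul_mul_projMat_apply, liftMat_apply_eq_zero m hD]
    simp
  · refine le_trans (le_of_eq ?_) (h D)
    congr 1
    ext r s
    rw [Matrix.of_apply, projMat_mul_mul_projMat_apply, projMat_mul_mul_projMat_apply,
      liftMat_apply_update]
    simp only [Set.indicator_apply, Set.mem_compl_iff, Set.mem_ofPred_eq]

/-! ### The single-register compressed oracle -/

theorem compMat_mul_self (Y : Type*) [Fintype Y] [DecidableEq Y] [Nonempty Y] :
    compMat Y * compMat Y = 1 := by
  have hM : (Fintype.card Y : ℂ) ≠ 0 := by simp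
  have hs : ((√(Fintype.card Y : ℝ) : ℝ) : ℂ)⁻¹ * ((√(Fintype.card Y : ℝ) : ℝ) : ℂ)⁻¹ =
      (Fintype.card Y : ℂ)⁻¹ := by
    rw [← mul_inv, ← Complex.ofReal_mul, Real.mul_self_sqrt (by positivity),
      Complex.ofReal_natCast]
  ext u v
  rw [Matrix.mul_apply, Fintype.sum_option]
  rcases u with _ | a <;> rcases v with _ | b
  · simp [compMat, hs]
  · simp [compMat, mul_sub, Finset.sum_sub_distrib]
    field_simp
    ring
  · simp [compMat, sub_mul, Finset.sum_sub_distrib]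
  · simp only [compMat, Matrix.of_apply, hs, sub_mul, mul_sub, Finset.sum_sub_distrib,
      Matrix.one_apply, Option.some_inj]
    simp

theorem star_compMat (Y : Type*) [Fintype Y] [DecidableEq Y] :
    star (compMat Y) = compMat Y := by
  ext u v
  rcases u with _ | a <;> rcases v with _ | b <;>
    simp [compMat, Matrix.star_apply, eq_comm]

theorem norm_cOMat_le_one {Y : Type*} [Fintype Y] [DecidableEq Y] [AddCommGroup Y]
    (c : AddChar Y ℂ) : ‖cOMat c‖ ≤ 1 := by
  have hComp : ‖compMat Y‖ ≤ 1 :=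
    l2_opNorm_le_one_of_star_mul_self (by rw [star_compMat, compMat_mul_self])
  have hO : ‖oMat c‖ ≤ 1 := by
    rw [oMat, Matrix.l2_opNorm_diagonal]
    refine (pi_norm_le_iff_of_nonneg zero_le_one).2 fun u => ?_
    rcases u with _ | r <;> simp [AddChar.norm_apply]
  refine (norm_mul_le _ _).trans (mul_le_one₀ ?_ (norm_nonneg _) hComp)
  exact (norm_mul_le _ _).trans (mul_le_one₀ hComp (norm_nonneg _) hO)

theorem cOMat_some_none {Y : Type*} [Fintype Y] [DecidableEq Y] [AddCommGroup Y]
    (c : AddChar Y ℂ) (u : Y) :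
    cOMat c (some u) none =
      (c u - (∑ r, c r) / Fintype.card Y) * ((√(Fintype.card Y) : ℝ) : ℂ)⁻¹ := by
  rw [cOMat, oMat, Matrix.mul_apply, Fintype.sum_option]
  simp only [Matrix.mul_diagonal]
  simp [compMat, sub_mul, Finset.sum_sub_distrib, ← Finset.sum_mul, ← Finset.mul_sum]
  ring

theorem cOMat_some_some {Y : Type*} [Fintype Y] [DecidableEq Y] [AddCommGroup Y]
    (c : AddChar Y ℂ) {u v : Y} (huv : u ≠ v) :
    cOMat c (some u) (some v) =
      (1 - c u - c v + (∑ r, c r) / Fintype.card Y) / Fintype.card Y := by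
  have hM : (Fintype.card Y : ℂ) ≠ 0 := by simp
  have hs : ((√(Fintype.card Y : ℝ) : ℝ) : ℂ)⁻¹ * ((√(Fintype.card Y : ℝ) : ℝ) : ℂ)⁻¹ =
      (Fintype.card Y : ℂ)⁻¹ := by
    rw [← mul_inv, ← Complex.ofReal_mul, Real.mul_self_sqrt (by positivity),
      Complex.ofReal_natCast]
  rw [cOMat, oMat, Matrix.mul_apply, Fintype.sum_option]
  simp only [Matrix.mul_diagonal]
  simp [compMat, sub_mul, mul_sub, Finset.sum_sub_distrib, ← Finset.sum_mul,
    ← Finset.mul_sum, hs, huv]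
  field_simp
  ring

theorem sq_norm_cOMat_some_none_le {Y : Type*} [Fintype Y] [DecidableEq Y] [AddCommGroup Y]
    (c : AddChar Y ℂ) (u : Y) :
    ‖cOMat c (some u) none‖ ^ 2 ≤ 1 / Fintype.card Y := by
  have hM : (Fintype.card Y : ℂ) ≠ 0 := by simp
  rw [cOMat_some_none, AddChar.sum_eq_ite]
  split_ifs with hc
  · simp [hc]
  · simp [AddChar.norm_apply]

theorem norm_cOMat_some_some_le {Y : Type*} [Fintype Y] [DecidableEq Y] [AddCommGroup Y]
    (c : AddChar Y ℂ) {u v : Y} (huv : u ≠ v) :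
    ‖cOMat c (some u) (some v)‖ ≤ 3 / Fintype.card Y := by
  have hM : (Fintype.card Y : ℂ) ≠ 0 := by simp
  rw [cOMat_some_some c huv, AddChar.sum_eq_ite]
  split_ifs with hc
  · simp [hc]
    positivity
  · rw [norm_div, Complex.norm_natCast]
    gcongr
    rw [zero_div, add_zero]
    refine (norm_sub_le _ _).trans ?_
    have := norm_sub_le 1 (c u)
    rw [AddChar.norm_apply] at *
    norm_num at this
    linarith

theorem norm_proj_mul_cOMat_mul_proj_compl_le {Y : Type*} [Fintype Y] [DecidableEq Y]
    [AddCommGroup Y] (c : AddChar Y ℂ) {S : Set (Option Y)} (hS : none ∉ S) :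
    ‖projMat S * cOMat c * projMat Sᶜ‖ ≤
      √(10 * ({y : Y | some y ∈ S}.ncard / Fintype.card Y)) := by
  classical
  refine (l2_opNorm_le_frobenius _).trans (Real.sqrt_le_sqrt ?_)
  have hM : (0 : ℝ) < Fintype.card Y := by exact_mod_cast Fintype.card_pos
  have hrow : ∀ u : Y, ∑ s, ‖(projMat S * cOMat c * projMat Sᶜ) (some u) s‖ ^ 2 ≤
      if some u ∈ S then (10 / Fintype.card Y : ℝ) else 0 := by
    intro u
    simp only [projMat_mul_mul_projMat_apply]
    split_ifs with hu
    · rw [Fintype.sum_option]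
      have hv : ∀ v : Y, ‖S.indicator (fun _ => (1 : ℂ)) (some u) * cOMat c (some u) (some v) *
          Sᶜ.indicator (fun _ => (1 : ℂ)) (some v)‖ ^ 2 ≤ (3 / Fintype.card Y : ℝ) ^ 2 := by
        intro v
        by_cases hv : some v ∈ S
        · simp [hv]
          positivity
        · gcongr
          have huv : u ≠ v := by rintro rfl; exact hv hu
          simpa [hu, hv] using norm_cOMat_some_some_le c huv
      refine (add_le_add ?_ (Finset.sum_le_sum fun v _ => hv v)).trans
        (?_ : 1 / (Fintype.card Y : ℝ) + _ ≤ _)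
      · simpa [hu, hS] using sq_norm_cOMat_some_none_le c u
      · rw [Finset.sum_const, Finset.card_univ, nsmul_eq_mul]
        refine le_of_eq ?_
        field_simp
        norm_num
    · simp [hu]
  rw [Fintype.sum_option]
  refine (add_le_add (le_of_eq ?_) (Finset.sum_le_sum fun u _ => hrow u)).trans
    (?_ : (0 : ℝ) + _ ≤ _)
  · simp [projMat_mul_mul_projMat_apply, hS]
  · rw [Finset.sum_ite, Set.ncard_eq_toFinset_card']
    simp
    refine le_of_eq ?_
    ring

end

section
open scoped Matrix.Norms.L2Operator

theorem norm_cOparMat_transition_le {X Y : Type*} [Fintype X] [DecidableEq X] [Fintype Y]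
    [DecidableEq Y] [AddCommGroup Y] {k ℓ : ℕ} {x : Fin k → X} (hx : Function.Injective x)
    (c : Fin k → AddChar Y ℂ) {S : Set (X → Option Y)} {s : Finset X} (hs : s.card ≤ ℓ)
    (hloc : ∀ D₁ D₂ : X → Option Y, (∀ a ∈ s, D₁ a = D₂ a) → (D₁ ∈ S ↔ D₂ ∈ S))
    (hmono : ∀ D ∈ S, ∀ a ∈ s, D a = none → ∀ y : Y, Function.update D a (some y) ∈ S)
    {ρ : ℝ} (hρ : ∀ a ∈ s, ∀ D : X → Option Y,
      {r : Option Y | Function.update D a r ∈ S} ≠ ∅ →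
      {r : Option Y | Function.update D a r ∈ S} ≠ Set.univ →
      ({y : Y | Function.update D a (some y) ∈ S}.ncard : ℝ) / Fintype.card Y ≤ ρ) :
    ‖toOp (projMat S * cOparMat x c * projMat Sᶜ)‖ ≤ ℓ * √(10 * ρ) := by
  have hterm : ∀ i, ‖projMat S * liftMat (x i) (cOMat (c i)) * projMat Sᶜ‖ ≤
      if x i ∈ s then √(10 * ρ) else 0 := by
    intro i
    have hempty : projMat (∅ : Set (Option Y)) = 0 := by
      rw [projMat_eq_diagonal]
      simp
    refine norm_proj_mul_liftMat_mul_proj_compl_le S (x i) _ ?_ fun D => ?_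
    · split_ifs <;> positivity
    by_cases h0 : {r : Option Y | Function.update D (x i) r ∈ S} = ∅
    · rw [h0, hempty, zero_mul, zero_mul, norm_zero]
      split_ifs <;> positivity
    by_cases h1 : {r : Option Y | Function.update D (x i) r ∈ S} = Set.univ
    · rw [h1, Set.compl_univ, hempty, mul_zero, norm_zero]
      split_ifs <;> positivity
    have hi : x i ∈ s := by
      by_contra hi
      obtain ⟨r, hr⟩ := Set.nonempty_iff_ne_empty.2 h0
      refine h1 (Set.eq_univ_of_forall fun r' => ?_)
      refine (hloc _ _ fun a ha => ?_).1 hr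
      have : a ≠ x i := by rintro rfl; exact hi ha
      rw [Function.update_of_ne this, Function.update_of_ne this]
    have hnone : none ∉ {r : Option Y | Function.update D (x i) r ∈ S} := by
      intro hn
      refine h1 (Set.eq_univ_of_forall fun r' => ?_)
      rcases r' with _ | y
      · exact hn
      · have := hmono _ hn (x i) hi (by simp) y
        simpa using this
    rw [if_pos hi]
    refine (norm_proj_mul_cOMat_mul_proj_compl_le (c i) hnone).trans (Real.sqrt_le_sqrt ?_)
    exact mul_le_mul_of_nonneg_left (hρ (x i) hi D h0 h1) (by norm_num)
  have hprod := norm_proj_mul_prod_mul_proj_compl_le S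
    (List.ofFn fun i => liftMat (x i) (cOMat (c i))) fun A hA => by
      obtain ⟨i, rfl⟩ := List.mem_ofFn.1 hA
      exact (norm_liftMat_le _ _).trans (norm_cOMat_le_one _)
  rw [List.map_ofFn, List.sum_ofFn] at hprod
  refine hprod.trans ((Finset.sum_le_sum fun i _ => hterm i).trans ?_)
  rw [Finset.sum_ite, Finset.sum_const_zero, add_zero, Finset.sum_const, nsmul_eq_mul]
  gcongr
  refine le_trans ?_ hs
  exact Finset.card_le_card_of_injOn x (fun i hi => by simpa using hi) hx.injOn

end

open Classical in
theorem stmt_10 {X Y : Type*} [Fintype X] [DecidableEq X] [Nonempty X]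
    [Fintype Y] [DecidableEq Y] [AddCommGroup Y]
    (k ℓ : ℕ) (hk : 1 ≤ k) (hℓ : 1 ≤ ℓ) (P P' : Set (X → Option Y))
    -- the finite family of `ℓ`-local properties `(L_t)`, with supports `supp`,
    -- depending on `x` and `D`
    (τ : Type*) [Fintype τ]
    (L : (Fin k → X) → (X → Option Y) → τ → Set (X → Option Y))
    (supp : (Fin k → X) → (X → Option Y) → τ → Finset X)
    -- supports lie in `{x_1, …, x_k}` and have size at most `ℓ`
    (hsupp : ∀ (x : Fin k → X) (D : X → Option Y) (t : τ), Function.Injective x →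
      ↑(supp x D t) ⊆ Set.range x ∧ (supp x D t).card ≤ ℓ)
    -- membership in `L_t` is determined by the values on its support
    (hloc : ∀ (x : Fin k → X) (D : X → Option Y) (t : τ) (D₁ D₂ : X → Option Y),
      Function.Injective x → (∀ a ∈ supp x D t, D₁ a = D₂ a) →
        (D₁ ∈ L x D t ↔ D₂ ∈ L x D t))
    -- a `⊥`-value on the support may be redefined to any element of `Y`
    (hmono : ∀ (x : Fin k → X) (D : X → Option Y) (t : τ) (D₁ : X → Option Y),
      Function.Injective x → D₁ ∈ L x D t → ∀ a ∈ supp x D t, D₁ a = none →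
        ∀ y : Y, Function.update D₁ a (some y) ∈ L x D t)
    -- `P'|_{D|^x} ⊆ ∪_t L_t`
    (hcover : ∀ (x : Fin k → X) (D : X → Option Y), Function.Injective x →
      P' ∩ agreeOff D x ⊆ ⋃ t : τ, L x D t)
    -- `(∪_t L_t) ∩ P|_{D|^x} = ∅`
    (hdisj : ∀ (x : Fin k → X) (D : X → Option Y), Function.Injective x →
      (⋃ t : τ, L x D t) ∩ (P ∩ agreeOff D x) = ∅) :
    qtc P P' k Set.univ ≤
      sSup {v : ℝ | ∃ (x : Fin k → X) (D : X → Option Y), Function.Injective x ∧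
        v = Real.exp 1 * ℓ * Real.sqrt (10 * ∑ t : τ,
          sSup {w : ℝ | ∃ t' ∈ supp x D t, ∃ D'' : X → Option Y,
            (∀ a ∉ supp x D t, D'' a = D a) ∧
            w = if {r : Option Y | Function.update D'' t' r ∈ L x D t} = ∅ ∨
                   {r : Option Y | Function.update D'' t' r ∈ L x D t} = Set.univ
                then (0 : ℝ)
                else ({y : Y | Function.update D'' t' (some y) ∈ L x D t}.ncard : ℝ) /
                  Fintype.card Y})} := by
  refine Real.sSup_le ?_ (Real.sSup_nonneg ?_)
  swap
  · rintro v ⟨x, D, -, rfl⟩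
    positivity
  rintro v ⟨x, c, D, hx, -, rfl⟩
  set a : τ → ℝ := fun t => sSup {w : ℝ | ∃ t' ∈ supp x D t, ∃ D'' : X → Option Y,
            (∀ a ∉ supp x D t, D'' a = D a) ∧
            w = if {r : Option Y | Function.update D'' t' r ∈ L x D t} = ∅ ∨
                   {r : Option Y | Function.update D'' t' r ∈ L x D t} = Set.univ
                then (0 : ℝ)
                else ({y : Y | Function.update D'' t' (some y) ∈ L x D t}.ncard : ℝ) /
                  Fintype.card Y} with ha
  have ha0 : ∀ t, 0 ≤ a t := by
    intro t
    refine Real.sSup_nonneg ?_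
    rintro w ⟨t', -, D'', -, rfl⟩
    split_ifs <;> positivity
  refine le_trans ?_ (le_csSup ?_ ⟨x, D, hx, rfl⟩)
  swap
  · refine (Set.finite_range fun p : (Fin k → X) × (X → Option Y) =>
      Real.exp 1 * ℓ * Real.sqrt (10 * ∑ t : τ,
          sSup {w : ℝ | ∃ t' ∈ supp p.1 p.2 t, ∃ D'' : X → Option Y,
            (∀ a ∉ supp p.1 p.2 t, D'' a = p.2 a) ∧
            w = if {r : Option Y | Function.update D'' t' r ∈ L p.1 p.2 t} = ∅ ∨
                   {r : Option Y | Function.update D'' t' r ∈ L p.1 p.2 t} = Set.univ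
                then (0 : ℝ)
                else ({y : Y | Function.update D'' t' (some y) ∈ L p.1 p.2 t}.ncard : ℝ) /
                  Fintype.card Y})).bddAbove.mono ?_
    rintro v ⟨x, D, -, rfl⟩
    exact ⟨(x, D), rfl⟩
  have hL : ∀ t, ‖toOp (projMat (L x D t) * cOparMat x c * projMat (L x D t)ᶜ)‖ ≤
      ℓ * √(10 * a t) := by
    intro t
    refine norm_cOparMat_transition_le hx c (hsupp x D t hx).2
      (fun D₁ D₂ => hloc x D t D₁ D₂ hx) (fun D₁ => hmono x D t D₁ hx) ?_
    intro t' ht' D₁ h0 h1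
    set D'' : X → Option Y := fun b => if b ∈ supp x D t then D₁ b else D b with hD''
    have hiff : ∀ r, Function.update D₁ t' r ∈ L x D t ↔ Function.update D'' t' r ∈ L x D t := by
      intro r
      refine hloc x D t _ _ hx fun b hb => ?_
      by_cases hbt : b = t'
      · subst hbt
        simp
      · simp [hbt, hD'', hb]
    simp only [hiff] at h0 h1 ⊢
    refine le_csSup ?_ ⟨t', ht', D'', fun b hb => by simp [hD'', hb], ?_⟩
    · refine (Set.finite_range fun p : X × (X → Option Y) =>
        if {r : Option Y | Function.update p.2 p.1 r ∈ L x D t} = ∅ ∨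
            {r : Option Y | Function.update p.2 p.1 r ∈ L x D t} = Set.univ
        then (0 : ℝ)
        else ({y : Y | Function.update p.2 p.1 (some y) ∈ L x D t}.ncard : ℝ) /
          Fintype.card Y).bddAbove.mono ?_
      rintro w ⟨t', -, D'', -, rfl⟩
      exact ⟨(t', D''), rfl⟩
    · rw [if_neg (by tauto)]
  refine (norm_toOp_proj_comp_le (hcover x D hx) (hdisj x D hx) (cOparMat x c)
    (Nat.cast_nonneg ℓ) ha0 hL).trans ?_
  gcongr
  exact le_mul_of_one_le_left (by positivity) (Real.one_le_exp zero_le_one)
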